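/- Let F be a union-closed family on n elements with m sets and suppose H(F) = 2. Then the number of sets in π₁ satisfies 1 ≤ |π₁| ≤ n. -/

import Mathlib

open Finset

/-- The minimal members of a family of finite sets: those `A` such that no
member `B ≠ A` satisfies `B ⊆ A`. -/
def minimalSets (G : Finset (Finset ℕ)) : Finset (Finset ℕ) :=
  G.filter fun A => ∀ B ∈ G, B ≠ A → ¬ B ⊆ A

/-- The family remaining after removing the first `i` layers of the height
decomposition. -/
def rest (F : Finset (Finset ℕ)) : ℕ → Finset (Finset ℕ)
  | 0 => F
  | i + 1 => rest F i \ minimalSets (rest F i)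

/-- The `i`-th layer `π_i` of the height decomposition (meaningful for `i ≥ 1`):
`π_{i+1}` is the family of minimal members of `F \ (π₁ ∪ ⋯ ∪ π_i)`. -/
def layer (F : Finset (Finset ℕ)) : ℕ → Finset (Finset ℕ)
  | 0 => ∅
  | i + 1 => minimalSets (rest F i)

/-- The height number `H(F)`: the least `H` with `F = π₁ ∪ ⋯ ∪ π_H`,
equivalently the least `H` with `rest F H = ∅`. -/
noncomputable def height (F : Finset (Finset ℕ)) : ℕ :=
  sInf {H : ℕ | rest F H = ∅}

/-- `F` is a union-closed family on `n` elements with `m` sets: a finite family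
of `m` distinct nonempty finite sets whose union is `{1, …, n}`, closed under
unions. -/
def IsUC (F : Finset (Finset ℕ)) (n m : ℕ) : Prop :=
  F.Nonempty ∧ F.card = m ∧ (∀ A ∈ F, A.Nonempty) ∧
    F.sup id = Finset.Icc 1 n ∧ ∀ A ∈ F, ∀ B ∈ F, A ∪ B ∈ F

/-- The tent `T(A)` of a set `A` of level `i ≥ 2`: the family
`{A} ∪ {B ∈ π_{i−1} : B ⊆ A}`. -/
def tent (F : Finset (Finset ℕ)) (i : ℕ) (A : Finset ℕ) : Finset (Finset ℕ) :=
  insert A ((layer F (i - 1)).filter fun B => B ⊆ A)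

/-- `F` is separating: every pair of distinct elements of `{1, …, n}` is
separated by some member of `F`. -/
def Separating (F : Finset (Finset ℕ)) (n : ℕ) : Prop :=
  ∀ x ∈ Finset.Icc 1 n, ∀ y ∈ Finset.Icc 1 n, x ≠ y →
    ∃ A ∈ F, (x ∈ A ∧ y ∉ A) ∨ (y ∈ A ∧ x ∉ A)

/-!
Let `U = ⋃ F` and `H = H(F)`. Every family `F \ (π₁ ∪ ⋯ ∪ π_i)` contains, with any of its members,
all larger members of `F`. For `i = H - 1` it is moreover an antichain, and it contains `U`, so it
is `{U}`. Hence in the family `F \ (π₁ ∪ ⋯ ∪ π_{H-2})`, whose minimal members form `π_{H-1}`, the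
only non-minimal member is `U`, and any two distinct members of `π_{H-1}` have union `U`. Their
complements in `U` are thus pairwise disjoint and nonempty, so there are at most `|U|` of them.
-/

theorem card_le_card_of_pairwise_union_eq {α : Type*} [DecidableEq α] {S : Finset (Finset α)}
    {U : Finset α} (hssubset : ∀ A ∈ S, A ⊂ U)
    (hunion : (S : Set (Finset α)).Pairwise fun A B => A ∪ B = U) : S.card ≤ U.card := by
  have hdisjoint : (S : Set (Finset α)).PairwiseDisjoint (U \ ·) := fun A hA B hB hAB => by
    rw [Function.onFun, disjoint_iff_inter_eq_empty, ← sdiff_union_distrib, hunion hA hB hAB,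
      sdiff_self, bot_eq_empty]
  have hnonempty : ∀ A ∈ S, (U \ A).Nonempty := fun A hA =>
    sdiff_nonempty.mpr (hssubset A hA).not_subset
  calc
    S.card ≤ (S.biUnion (U \ ·)).card := card_le_card_biUnion hdisjoint hnonempty
    _ ≤ U.card := card_le_card (biUnion_subset.mpr fun _ _ => sdiff_subset)

theorem not_minimal_sup_of_ne {α : Type*} [SemilatticeSup α] {P : α → Prop} {a b : α}
    (ha : Minimal P a) (hb : Minimal P b) (hab : a ≠ b) : ¬ Minimal P (a ⊔ b) := fun h =>
  hab ((h.eq_of_le ha.prop le_sup_left).trans (h.eq_of_le hb.prop le_sup_right).symm)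

theorem mem_minimalSets {G : Finset (Finset ℕ)} {A : Finset ℕ} :
    A ∈ minimalSets G ↔ Minimal (· ∈ G) A := by
  simp only [minimalSets, mem_filter, minimal_iff, ne_eq, not_imp_not, eq_comm]

theorem minimalSets_nonempty {G : Finset (Finset ℕ)} (hG : G.Nonempty) :
    (minimalSets G).Nonempty := by
  obtain ⟨A, hA⟩ := G.exists_minimal hG
  exact ⟨A, mem_minimalSets.mpr hA⟩

section HeightDecomposition

variable {F : Finset (Finset ℕ)} {A B : Finset ℕ} {i : ℕ}

theorem rest_subset (F : Finset (Finset ℕ)) : ∀ i, rest F i ⊆ F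
  | 0 => Subset.rfl
  | i + 1 => sdiff_subset.trans (rest_subset F i)

theorem mem_rest_of_subset (hA : A ∈ rest F i) (hB : B ∈ F) (hAB : A ⊆ B) : B ∈ rest F i := by
  induction i with
  | zero => exact hB
  | succ i ih =>
    obtain ⟨hA, hA_min⟩ := mem_sdiff.mp hA
    refine mem_sdiff.mpr ⟨ih hA, fun hB_min => hA_min ?_⟩
    exact (mem_minimalSets.mp hB_min).eq_of_le hA hAB ▸ hB_min

theorem supClosed_rest (hF : SupClosed (F : Set (Finset ℕ))) (i : ℕ) :
    SupClosed (rest F i : Set (Finset ℕ)) := fun _ hA _ hB =>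
  mem_rest_of_subset hA (hF (rest_subset F i hA) (rest_subset F i hB)) subset_union_left

theorem rest_nonempty_of_lt_height (h : i < height F) : (rest F i).Nonempty :=
  nonempty_iff_ne_empty.mpr (Nat.notMem_of_lt_sInf h)

theorem rest_height_eq_empty (h : 0 < height F) : rest F (height F) = ∅ :=
  Nat.sInf_mem (Nat.nonempty_of_pos_sInf h)

theorem rest_eq_singleton_sup (hF : SupClosed (F : Set (Finset ℕ))) (h : height F = i + 1) :
    rest F i = {F.sup id} := by
  have hrest : (rest F i).Nonempty := rest_nonempty_of_lt_height (by omega)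
  have hsup : F.sup id ∈ F := hF.finsetSup_mem (hrest.mono (rest_subset F i)) fun _ => id
  have hminimal : rest F i ⊆ minimalSets (rest F i) := by
    have hrest_succ : rest F (i + 1) = ∅ := h ▸ rest_height_eq_empty (by omega)
    exact sdiff_eq_empty_iff_subset.mp hrest_succ
  refine eq_singleton_iff_nonempty_unique_mem.mpr ⟨hrest, fun A hA => ?_⟩
  have hA_le : A ≤ F.sup id := le_sup (f := id) (rest_subset F i hA)
  have hsup_min := mem_minimalSets.mp (hminimal (mem_rest_of_subset hA hsup hA_le))
  exact hsup_min.eq_of_le hA hA_le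

theorem union_eq_sup_of_mem_layer (hF : SupClosed (F : Set (Finset ℕ))) (h : height F = i + 2)
    (hA : A ∈ layer F (i + 1)) (hB : B ∈ layer F (i + 1)) (hAB : A ≠ B) : A ∪ B = F.sup id := by
  have hA_min := mem_minimalSets.mp hA
  have hB_min := mem_minimalSets.mp hB
  have hunion : A ∪ B ∈ rest F (i + 1) := mem_sdiff.mpr
    ⟨supClosed_rest hF i hA_min.prop hB_min.prop, fun hAB_min =>
      not_minimal_sup_of_ne hA_min hB_min hAB (mem_minimalSets.mp hAB_min)⟩
  rwa [rest_eq_singleton_sup hF h, mem_singleton] at hunion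

theorem ssubset_sup_of_mem_layer (hF : SupClosed (F : Set (Finset ℕ))) (h : height F = i + 2)
    (hA : A ∈ layer F (i + 1)) : A ⊂ F.sup id := by
  have hsup : F.sup id ∈ rest F (i + 1) :=
    rest_eq_singleton_sup hF h ▸ mem_singleton_self (F.sup id)
  have hsup_notMem : F.sup id ∉ layer F (i + 1) := (mem_sdiff.mp hsup).2
  have hA_mem : A ∈ F := rest_subset F i (mem_minimalSets.mp hA).prop
  exact (le_sup (f := id) hA_mem).lt_of_ne (ne_of_mem_of_not_mem hA hsup_notMem)

theorem height_eq_two_card_layer_one_general (hF : SupClosed (F : Set (Finset ℕ)))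
    (h : height F = i + 2) :
    1 ≤ (layer F (i + 1)).card ∧ (layer F (i + 1)).card ≤ (F.sup id).card := by
  have hrest : (rest F i).Nonempty := rest_nonempty_of_lt_height (by omega)
  exact ⟨(minimalSets_nonempty hrest).card_pos,
    card_le_card_of_pairwise_union_eq (fun _ => ssubset_sup_of_mem_layer hF h)
      fun _ hA _ hB => union_eq_sup_of_mem_layer hF h hA hB⟩

end HeightDecomposition

/-- If `H(F) = 2`, then `1 ≤ |π₁| ≤ n`. -/
theorem height_eq_two_card_layer_one (n m : ℕ) (F : Finset (Finset ℕ))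
    (hF : IsUC F n m) (h : height F = 2) :
    1 ≤ (layer F 1).card ∧ (layer F 1).card ≤ n := by
  obtain ⟨-, -, -, hground, hunion⟩ := hF
  simpa [hground] using
    height_eq_two_card_layer_one_general (fun A hA B hB => hunion A hA B hB) h
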